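/- Let ψ be smooth, odd, supported in {1/4 ≤ |x| ≤ 1}, ψ_k(t) = 2^{-k}ψ(2^{-k}t), and φ Schwartz with 1_{[-1/8,1/8]} ≤ φ̂ ≤ 1_{[-1/4,1/4]}. Fix integers k, l with l > 0 and λ with 1 ≤ λ2^{2k−l} < 2. Set μ = ∫ e^{2πiλt²}ψ_k(t)dt and φ_{k,λ,l}(t) = e^{2πiλt²}ψ_k(t) − μ·φ_{k−l}(t), where φ_{k−l}(t) = 2^{l−k}φ(2^{l−k}t). Then there are constants 0 < c < 1 < C such that |φ̂_{k,λ,l}(ξ)| ≲ 2^{k−2l}|ξ| for |ξ| ≤ c2^{l−k}; |φ̂_{k,λ,l}(ξ)| ≲ 2^{−l/2} for c2^{l−k} ≤ |ξ| ≤ C2^{l−k}; and |φ̂_{k,λ,l}(ξ)| ≲ (2^k|ξ|)^{−1} for |ξ| ≥ C2^{l−k}. -/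

import Mathlib

open Real FourierTransform

noncomputable section

/-!
Since `ψ` is odd, the mean `μ` vanishes, and the substitution `t = 2^k s` turns `φ̂_{k,λ,l}(ξ)` into
the Fourier transform at `η = 2^k ξ` of the chirp `exp (2πiLs²) ψ(s)`, where `L = λ 2^{2k}` is
comparable to `2^l`.

* If `|η|` is large compared with `L`, the phase `Ls² - ηs` has derivative at least `|η| / 2` on the
  support of `ψ`, and one integration by parts gives `O(|η|⁻¹)`.
* If `|η|` is small compared with `L`, this derivative is at least a multiple of `L`. The transform
  vanishes at `η = 0` because `ψ` is odd, and its derivative in `η` is a chirp transform with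
  amplitude a multiple of `sψ(s)`, which two integrations by parts bound by `O(L⁻²)`.
* For all `η`, the dispersive bound `O(L^{-1/2})` holds: the multiplier `exp (2πiLs²)` is a limit of
  complex Gaussians whose Fourier transforms are bounded by `(2L)^{-1/2}`, and the inverse Fourier
  transform of `ψ` is integrable.
-/

section

open MeasureTheory Filter Topology Function

variable {Φ D : ℝ → ℝ} {g : ℝ → ℂ} {L η a m : ℝ}

/-- The oscillatory integral with phase `Φ` and amplitude `g`. As `𝐞 x = exp (2πix)`, the phase is
measured in full turns. -/
def oscillatoryIntegral (Φ : ℝ → ℝ) (g : ℝ → ℂ) : ℂ := ∫ s, 𝐞 (Φ s) • g s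

lemma norm_oscillatoryIntegral_le_of_norm_le {G : ℝ → ℝ} (hG : Integrable G)
    (h : ∀ s, ‖g s‖ ≤ G s) : ‖oscillatoryIntegral Φ g‖ ≤ ∫ s, G s :=
  norm_integral_le_of_norm_le hG
    (Eventually.of_forall fun s => (Circle.norm_smul _ _).trans_le (h s))

lemma oscillatoryIntegral_deriv_mul (hΦ : ContDiff ℝ 1 Φ) {w : ℝ → ℂ} (hw : ContDiff ℝ 1 w)
    (hwc : HasCompactSupport w) :
    2 * π * Complex.I * oscillatoryIntegral Φ (fun s => deriv Φ s * w s) =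
      -oscillatoryIntegral Φ (deriv w) := by
  have hchar (s : ℝ) : HasDerivAt (fun s => (𝐞 (Φ s) : ℂ))
      (deriv Φ s * (2 * π * Complex.I * 𝐞 (Φ s))) s := by
    simpa only [Function.comp_def, Complex.real_smul] using
      (hasDerivAt_fourierChar (Φ s)).scomp s (hΦ.differentiable one_ne_zero s).hasDerivAt
  have hchar_cont : Continuous fun s => (𝐞 (Φ s) : ℂ) :=
    continuous_iff_continuousAt.2 fun s => (hchar s).continuousAt
  have hΦ' : Continuous fun s => ((deriv Φ s : ℝ) : ℂ) :=
    Complex.continuous_ofReal.comp (hΦ.continuous_deriv le_rfl)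
  have hparts := integral_mul_deriv_eq_deriv_mul_of_integrable
    (fun s _ => hchar s) (fun s _ => (hw.differentiable one_ne_zero s).hasDerivAt)
    ((hchar_cont.mul (hw.continuous_deriv le_rfl)).integrable_of_hasCompactSupport
      hwc.deriv.mul_left)
    ((hΦ'.mul (continuous_const.mul hchar_cont)).mul hw.continuous
      |>.integrable_of_hasCompactSupport hwc.mul_left)
    ((hchar_cont.mul hw.continuous).integrable_of_hasCompactSupport hwc.mul_left)
  simp only [oscillatoryIntegral, Circle.smul_def, smul_eq_mul]
  rw [hparts, neg_neg, ← integral_const_mul]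
  congr with s
  ring

/-- The operator sending `g` to the derivative of `g / deriv Φ`, which is up to sign the adjoint of
`f ↦ deriv f / deriv Φ`: integrating by parts against `exp (2πiΦ)` replaces the amplitude `g` by a
multiple of its image. Where `deriv Φ` vanishes, the quotient is `0` by convention. -/
def phaseAdjoint (Φ : ℝ → ℝ) (g : ℝ → ℂ) : ℝ → ℂ := deriv fun s => g s / deriv Φ s

lemma contDiff_div_of_ne_zero_on_tsupport {n : WithTop ℕ∞} (hg : ContDiff ℝ n g)
    (hD : ContDiff ℝ n D) (h0 : ∀ s ∈ tsupport g, D s ≠ 0) :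
    ContDiff ℝ n fun s => g s / D s := by
  refine contDiff_iff_contDiffAt.2 fun s => ?_
  by_cases hs : s ∈ tsupport g
  · have hDc : ContDiff ℝ n fun s => (D s : ℂ) := Complex.ofRealCLM.contDiff.comp hD
    simp only [div_eq_mul_inv]
    exact hg.contDiffAt.mul (hDc.contDiffAt.inv (Complex.ofReal_ne_zero.2 (h0 s hs)))
  · have hzero : (fun s => g s / D s) =ᶠ[𝓝 s] fun _ => 0 := by
      filter_upwards [notMem_tsupport_iff_eventuallyEq.1 hs] with x hx
      simp [hx]
    exact contDiffAt_const.congr_of_eventuallyEq hzero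

lemma tsupport_div_subset : tsupport (fun s => g s / (D s : ℂ)) ⊆ tsupport g := by
  simp only [div_eq_mul_inv]
  exact tsupport_mul_subset_left

lemma tsupport_phaseAdjoint_subset : tsupport (phaseAdjoint Φ g) ⊆ tsupport g :=
  tsupport_deriv_subset.trans tsupport_div_subset

lemma contDiff_phaseAdjoint {n : ℕ} (hg : ContDiff ℝ (n + 1) g) (hΦ : ContDiff ℝ (n + 2) Φ)
    (h0 : ∀ s ∈ tsupport g, deriv Φ s ≠ 0) : ContDiff ℝ n (phaseAdjoint Φ g) := by
  have hΦ' : ContDiff ℝ (n + 1) (deriv Φ) := hΦ.iterate_deriv' (n + 1) 1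
  exact (contDiff_div_of_ne_zero_on_tsupport hg hΦ' h0).iterate_deriv' n 1

lemma oscillatoryIntegral_eq_phaseAdjoint (hΦ : ContDiff ℝ 2 Φ) (hg : ContDiff ℝ 1 g)
    (hgc : HasCompactSupport g) (h0 : ∀ s ∈ tsupport g, deriv Φ s ≠ 0) :
    oscillatoryIntegral Φ g =
      -(2 * π * Complex.I)⁻¹ * oscillatoryIntegral Φ (phaseAdjoint Φ g) := by
  have hw : ContDiff ℝ 1 fun s => g s / deriv Φ s :=
    contDiff_div_of_ne_zero_on_tsupport hg (hΦ.iterate_deriv' 1 1) h0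
  have hcancel : (fun s => ((deriv Φ s : ℝ) : ℂ) * (g s / deriv Φ s)) = g := by
    ext s
    by_cases hs : s ∈ tsupport g
    · exact mul_div_cancel₀ _ (Complex.ofReal_ne_zero.2 (h0 s hs))
    · simp [image_eq_zero_of_notMem_tsupport hs]
  have hparts := oscillatoryIntegral_deriv_mul (hΦ.of_le one_le_two) hw
    (hgc.mono' ((subset_tsupport _).trans tsupport_div_subset))
  rw [hcancel] at hparts
  rw [neg_mul, ← mul_neg, phaseAdjoint, ← hparts, inv_mul_cancel_left₀ Complex.two_pi_I_ne_zero]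

lemma hasDerivAt_div_pow_of_ne_zero_on_tsupport (hg : Differentiable ℝ g)
    (hD : ∀ s, HasDerivAt D a s) (h0 : ∀ s ∈ tsupport g, D s ≠ 0) (n : ℕ) (s : ℝ) :
    HasDerivAt (fun s => g s / (D s : ℂ) ^ n)
      (deriv g s / (D s : ℂ) ^ n - n * a * (g s / (D s : ℂ) ^ (n + 1))) s := by
  by_cases hs : s ∈ tsupport g
  · have hDs : (D s : ℂ) ≠ 0 := Complex.ofReal_ne_zero.2 (h0 s hs)
    refine ((hg s).hasDerivAt.fun_div ((hD s).ofReal_comp.fun_pow n)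
      (pow_ne_zero n hDs)).congr_deriv ?_
    cases n with
    | zero => simp
    | succ n =>
      push_cast
      field_simp
      ring
  · have hzero : (fun s => g s / (D s : ℂ) ^ n) =ᶠ[𝓝 s] fun _ => 0 := by
      filter_upwards [notMem_tsupport_iff_eventuallyEq.1 hs] with x hx
      simp [hx]
    simpa [deriv_of_notMem_tsupport hs, image_eq_zero_of_notMem_tsupport hs] using
      (hasDerivAt_const s (0 : ℂ)).congr_of_eventuallyEq hzero

/-- The phase `s ↦ L s² - η s` of the Fourier transform at `η` of an amplitude multiplied by
`exp (2πiLs²)`. -/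
def quadraticPhase (L η s : ℝ) : ℝ := L * s ^ 2 - η * s

lemma contDiff_quadraticPhase {n : WithTop ℕ∞} : ContDiff ℝ n (quadraticPhase L η) := by
  unfold quadraticPhase
  fun_prop

lemma deriv_quadraticPhase : deriv (quadraticPhase L η) = fun s => 2 * L * s - η := by
  ext s
  have h := ((hasDerivAt_pow 2 s).const_mul L).sub ((hasDerivAt_id s).const_mul η)
  refine h.deriv.trans ?_
  norm_num
  ring

lemma hasDerivAt_div_pow_deriv_quadraticPhase (hg : Differentiable ℝ g)
    (h0 : ∀ s ∈ tsupport g, 2 * L * s - η ≠ 0) (n : ℕ) (s : ℝ) :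
    HasDerivAt (fun s => g s / ((2 * L * s - η : ℝ) : ℂ) ^ n)
      (deriv g s / ((2 * L * s - η : ℝ) : ℂ) ^ n -
        n * (2 * L) * (g s / ((2 * L * s - η : ℝ) : ℂ) ^ (n + 1))) s := by
  have hD (s : ℝ) : HasDerivAt (fun s => 2 * L * s - η) (2 * L) s := by
    simpa using ((hasDerivAt_id s).const_mul (2 * L)).sub_const η
  simpa using hasDerivAt_div_pow_of_ne_zero_on_tsupport hg hD h0 n s

lemma phaseAdjoint_quadraticPhase (hg : Differentiable ℝ g)
    (h0 : ∀ s ∈ tsupport g, 2 * L * s - η ≠ 0) :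
    phaseAdjoint (quadraticPhase L η) g = fun s =>
      deriv g s / ((2 * L * s - η : ℝ) : ℂ) ^ 1 -
        2 * L * (g s / ((2 * L * s - η : ℝ) : ℂ) ^ 2) := by
  ext s
  simpa only [phaseAdjoint, deriv_quadraticPhase, pow_one, Nat.cast_one, one_mul] using
    (hasDerivAt_div_pow_deriv_quadraticPhase hg h0 1 s).deriv

lemma phaseAdjoint_phaseAdjoint_quadraticPhase (hg : ContDiff ℝ 2 g)
    (h0 : ∀ s ∈ tsupport g, 2 * L * s - η ≠ 0) :
    phaseAdjoint (quadraticPhase L η) (phaseAdjoint (quadraticPhase L η) g) = fun s =>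
      deriv (deriv g) s / ((2 * L * s - η : ℝ) : ℂ) ^ 2 -
        6 * L * (deriv g s / ((2 * L * s - η : ℝ) : ℂ) ^ 3) +
        12 * L ^ 2 * (g s / ((2 * L * s - η : ℝ) : ℂ) ^ 4) := by
  have hgd : Differentiable ℝ g := hg.differentiable two_ne_zero
  have hg'd : Differentiable ℝ (deriv g) :=
    (hg.iterate_deriv' 1 1).differentiable one_ne_zero
  have h0' : ∀ s ∈ tsupport (deriv g), 2 * L * s - η ≠ 0 :=
    fun s hs => h0 s (tsupport_deriv_subset hs)
  have hquot : (fun s => phaseAdjoint (quadraticPhase L η) g s / ((2 * L * s - η : ℝ) : ℂ)) =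
      fun s => deriv g s / ((2 * L * s - η : ℝ) : ℂ) ^ 2 -
        2 * L * (g s / ((2 * L * s - η : ℝ) : ℂ) ^ 3) := by
    ext s
    rw [phaseAdjoint_quadraticPhase hgd h0]
    ring
  ext s
  rw [phaseAdjoint, deriv_quadraticPhase, hquot]
  refine ((hasDerivAt_div_pow_deriv_quadraticPhase hg'd h0' 2 s).fun_sub
    ((hasDerivAt_div_pow_deriv_quadraticPhase hgd h0 3 s).const_mul (2 * L : ℂ))).deriv.trans ?_
  norm_num
  ring

lemma norm_div_pow_le_of_le_on_tsupport (hm : 0 < m) (hD : ∀ s ∈ tsupport g, m ≤ |D s|) (n : ℕ)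
    (s : ℝ) : ‖g s / (D s : ℂ) ^ n‖ ≤ ‖g s‖ / m ^ n := by
  by_cases hs : s ∈ tsupport g
  · rw [norm_div, norm_pow, Complex.norm_real, Real.norm_eq_abs]
    have := hD s hs
    gcongr
  · simp [image_eq_zero_of_notMem_tsupport hs]

lemma norm_oscillatoryIntegral_quadraticPhase_le_first_order
    (hg : ContDiff ℝ 1 g) (hgc : HasCompactSupport g) (hm : 0 < m)
    (hηm : ∀ s ∈ tsupport g, m ≤ |2 * L * s - η|) :
    ‖oscillatoryIntegral (quadraticPhase L η) g‖ ≤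
      (2 * π)⁻¹ * ((∫ s, ‖deriv g s‖) / m + 2 * |L| * ((∫ s, ‖g s‖) / m ^ 2)) := by
  have h0 : ∀ s ∈ tsupport g, 2 * L * s - η ≠ 0 := fun s hs => abs_pos.1 (hm.trans_le (hηm s hs))
  have hΦ0 : ∀ s ∈ tsupport g, deriv (quadraticPhase L η) s ≠ 0 := by
    simpa only [deriv_quadraticPhase] using h0
  have hint : Integrable fun s => ‖g s‖ :=
    (hg.continuous.integrable_of_hasCompactSupport hgc).norm
  have hint' : Integrable fun s => ‖deriv g s‖ :=
    ((hg.continuous_deriv le_rfl).integrable_of_hasCompactSupport hgc.deriv).norm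
  have hbound (s : ℝ) : ‖phaseAdjoint (quadraticPhase L η) g s‖ ≤
      ‖deriv g s‖ / m ^ 1 + 2 * |L| * (‖g s‖ / m ^ 2) := by
    rw [phaseAdjoint_quadraticPhase (hg.differentiable one_ne_zero) h0]
    refine (norm_sub_le _ _).trans ?_
    simp only [norm_mul, Complex.norm_real, Real.norm_eq_abs, Complex.norm_ofNat]
    gcongr
    · exact norm_div_pow_le_of_le_on_tsupport hm (fun s hs => hηm s (tsupport_deriv_subset hs)) 1 s
    · exact norm_div_pow_le_of_le_on_tsupport hm hηm 2 s
  have hle := norm_oscillatoryIntegral_le_of_norm_le (Φ := quadraticPhase L η) (by fun_prop) hbound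
  rw [integral_add (by fun_prop) (by fun_prop), integral_const_mul, integral_div, integral_div,
    pow_one] at hle
  rw [oscillatoryIntegral_eq_phaseAdjoint contDiff_quadraticPhase hg hgc hΦ0, norm_mul]
  gcongr
  simp [abs_of_pos pi_pos]

lemma norm_oscillatoryIntegral_quadraticPhase_le_second_order
    (hg : ContDiff ℝ 2 g) (hgc : HasCompactSupport g) (hm : 0 < m)
    (hηm : ∀ s ∈ tsupport g, m ≤ |2 * L * s - η|) :
    ‖oscillatoryIntegral (quadraticPhase L η) g‖ ≤
      ((2 * π)⁻¹) ^ 2 * ((∫ s, ‖deriv (deriv g) s‖) / m ^ 2 +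
        6 * |L| * ((∫ s, ‖deriv g s‖) / m ^ 3) + 12 * L ^ 2 * ((∫ s, ‖g s‖) / m ^ 4)) := by
  have h0 : ∀ s ∈ tsupport g, 2 * L * s - η ≠ 0 := fun s hs => abs_pos.1 (hm.trans_le (hηm s hs))
  have hΦ0 : ∀ s ∈ tsupport g, deriv (quadraticPhase L η) s ≠ 0 := by
    simpa only [deriv_quadraticPhase] using h0
  have hg' : ContDiff ℝ 1 (deriv g) := hg.iterate_deriv' 1 1
  have hηm' : ∀ s ∈ tsupport (deriv g), m ≤ |2 * L * s - η| :=
    fun s hs => hηm s (tsupport_deriv_subset hs)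
  have hint : Integrable fun s => ‖g s‖ :=
    (hg.continuous.integrable_of_hasCompactSupport hgc).norm
  have hint' : Integrable fun s => ‖deriv g s‖ :=
    (hg'.continuous.integrable_of_hasCompactSupport hgc.deriv).norm
  have hint'' : Integrable fun s => ‖deriv (deriv g) s‖ :=
    ((hg'.continuous_deriv le_rfl).integrable_of_hasCompactSupport hgc.deriv.deriv).norm
  have hbound (s : ℝ) :
      ‖phaseAdjoint (quadraticPhase L η) (phaseAdjoint (quadraticPhase L η) g) s‖ ≤
        ‖deriv (deriv g) s‖ / m ^ 2 + 6 * |L| * (‖deriv g s‖ / m ^ 3) +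
          12 * L ^ 2 * (‖g s‖ / m ^ 4) := by
    rw [phaseAdjoint_phaseAdjoint_quadraticPhase hg h0]
    refine (norm_add_le_of_le (norm_sub_le _ _) le_rfl).trans ?_
    simp only [norm_mul, norm_pow, Complex.norm_real, Real.norm_eq_abs, Complex.norm_ofNat, sq_abs]
    gcongr
    · exact norm_div_pow_le_of_le_on_tsupport hm
        (fun s hs => hηm' s (tsupport_deriv_subset hs)) 2 s
    · exact norm_div_pow_le_of_le_on_tsupport hm hηm' 3 s
    · exact norm_div_pow_le_of_le_on_tsupport hm hηm 4 s
  have hle := norm_oscillatoryIntegral_le_of_norm_le (Φ := quadraticPhase L η) (by fun_prop) hbound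
  rw [integral_add (by fun_prop) (by fun_prop), integral_add (by fun_prop) (by fun_prop),
    integral_const_mul, integral_const_mul, integral_div, integral_div, integral_div] at hle
  rw [oscillatoryIntegral_eq_phaseAdjoint contDiff_quadraticPhase (hg.of_le one_le_two) hgc hΦ0,
    oscillatoryIntegral_eq_phaseAdjoint contDiff_quadraticPhase
      (contDiff_phaseAdjoint (n := 1) hg contDiff_quadraticPhase hΦ0)
      (hgc.mono' ((subset_tsupport _).trans tsupport_phaseAdjoint_subset))
      (fun s hs => hΦ0 s (tsupport_phaseAdjoint_subset hs)), ← mul_assoc, ← sq, norm_mul]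
  gcongr
  simp [abs_of_pos pi_pos]

/-- The amplitude `g` modulated by the chirp `exp (2πiLt²)`. -/
def chirp (L : ℝ) (g : ℝ → ℂ) (t : ℝ) : ℂ := 𝐞 (L * t ^ 2) • g t

lemma norm_chirp (t : ℝ) : ‖chirp L g t‖ = ‖g t‖ := Circle.norm_smul _ _

lemma chirp_mul (f g : ℝ → ℂ) : chirp L (f * g) = f * chirp L g := by
  ext t
  simp only [chirp, Pi.mul_apply, mul_smul_comm]

lemma odd_chirp (hg : Function.Odd g) : Function.Odd (chirp L g) := fun t => by
  simp only [chirp, neg_sq, hg t, smul_neg]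

lemma integrable_chirp (hg : Integrable g) : Integrable (chirp L g) :=
  hg.mono ((by fun_prop : Continuous fun t : ℝ => 𝐞 (L * t ^ 2)).aestronglyMeasurable.smul
    hg.aestronglyMeasurable) (Eventually.of_forall fun t => (norm_chirp t).le)

lemma fourier_chirp : 𝓕 (chirp L g) η = oscillatoryIntegral (quadraticPhase L η) g := by
  rw [Real.fourier_real_eq, oscillatoryIntegral]
  congr with t
  rw [chirp, smul_smul, ← AddChar.map_add_eq_mul, quadraticPhase]
  ring_nf

lemma integral_eq_zero_of_odd {f : ℝ → ℂ} (hf : Function.Odd f) : ∫ t, f t = 0 := by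
  have h := integral_neg_eq_self f volume
  simp only [hf _, integral_neg] at h
  exact neg_eq_self.1 h

lemma fourier_zero_of_odd {f : ℝ → ℂ} (hf : Function.Odd f) : 𝓕 f 0 = 0 := by
  simpa [Real.fourier_real_eq] using integral_eq_zero_of_odd hf

lemma exists_norm_fourier_chirp_le_div_sq {r : ℝ} (hg : ContDiff ℝ 2 g)
    (hgc : HasCompactSupport g) (hr : 0 < r) (hgr : ∀ s ∈ tsupport g, r ≤ |s|) :
    ∃ K, 0 ≤ K ∧ ∀ L η : ℝ, L ≠ 0 → |η| ≤ r * |L| → ‖𝓕 (chirp L g) η‖ ≤ K / L ^ 2 := by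
  refine ⟨((2 * π)⁻¹) ^ 2 * ((∫ s, ‖deriv (deriv g) s‖) / r ^ 2 +
    6 * ((∫ s, ‖deriv g s‖) / r ^ 3) + 12 * ((∫ s, ‖g s‖) / r ^ 4)), by positivity,
    fun L η hL hη => ?_⟩
  have hL' : 0 < |L| := abs_pos.2 hL
  have hphase : ∀ s ∈ tsupport g, r * |L| ≤ |2 * L * s - η| := fun s hs => by
    have hs' : r * |L| ≤ |s| * |L| := mul_le_mul_of_nonneg_right (hgr s hs) hL'.le
    have htri : |2 * L * s| - |η| ≤ |2 * L * s - η| := abs_sub_abs_le_abs_sub _ _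
    rw [abs_mul, abs_mul, abs_two] at htri
    linarith
  rw [fourier_chirp]
  refine (norm_oscillatoryIntegral_quadraticPhase_le_second_order hg hgc
    (mul_pos hr hL') hphase).trans_eq ?_
  rw [← sq_abs L]
  field_simp

lemma hasDerivAt_fourier_chirp (hg : Continuous g) (hgc : HasCompactSupport g) (w : ℝ) :
    HasDerivAt (𝓕 (chirp L g))
      (-2 * π * Complex.I * 𝓕 (chirp L (Complex.ofReal * g)) w) w := by
  have hxg : Integrable (Complex.ofReal * g) :=
    (Complex.continuous_ofReal.mul hg).integrable_of_hasCompactSupport hgc.mul_left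
  have hxchirp : Integrable fun t : ℝ => t • chirp L g t := by
    simpa only [chirp_mul] using! integrable_chirp (L := L) hxg
  refine (Real.hasDerivAt_fourier (integrable_chirp (hg.integrable_of_hasCompactSupport hgc))
    hxchirp w).congr_deriv ?_
  rw [Real.fourier_real_eq, Real.fourier_real_eq, ← integral_const_mul]
  congr with t
  simp only [chirp_mul, Pi.mul_apply, smul_eq_mul, Circle.smul_def]
  ring

lemma exists_norm_fourier_chirp_le_of_low_frequency {r : ℝ} (hg : ContDiff ℝ 2 g)
    (hgc : HasCompactSupport g) (hodd : Function.Odd g) (hr : 0 < r)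
    (hgr : ∀ s ∈ tsupport g, r ≤ |s|) :
    ∃ K, 0 ≤ K ∧ ∀ L η : ℝ, L ≠ 0 → |η| ≤ r * |L| → ‖𝓕 (chirp L g) η‖ ≤ K / L ^ 2 * |η| := by
  obtain ⟨K, hK, hbound⟩ := exists_norm_fourier_chirp_le_div_sq (g := Complex.ofReal * g)
    (Complex.ofRealCLM.contDiff.mul hg) hgc.mul_left hr
    (fun s hs => hgr s (tsupport_mul_subset_right hs))
  refine ⟨2 * π * K, by positivity, fun L η hL hη => ?_⟩
  have hderiv_le : ∀ w ∈ Set.Icc (-(r * |L|)) (r * |L|),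
      ‖-2 * π * Complex.I * 𝓕 (chirp L (Complex.ofReal * g)) w‖ ≤ 2 * π * K / L ^ 2 := by
    intro w hw
    have hnorm : ‖(-2 * π * Complex.I : ℂ)‖ = 2 * π := by simp [abs_of_pos pi_pos]
    rw [norm_mul, hnorm, mul_div_assoc]
    gcongr
    exact hbound L w hL (abs_le.2 hw)
  have hmean := (convex_Icc _ _).norm_image_sub_le_of_norm_hasDerivWithin_le
    (fun w _ => (hasDerivAt_fourier_chirp (L := L) hg.continuous hgc w).hasDerivWithinAt)
    hderiv_le (abs_le.1 (abs_zero.trans_le (by positivity))) (abs_le.1 hη)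
  simpa only [fourier_zero_of_odd (odd_chirp hodd), sub_zero, Real.norm_eq_abs] using hmean

lemma exists_norm_fourier_chirp_le_of_high_frequency {R : ℝ} (hg : ContDiff ℝ 1 g)
    (hgc : HasCompactSupport g) (hR : 0 < R) (hgR : ∀ s ∈ tsupport g, |s| ≤ R) :
    ∃ K, 0 ≤ K ∧ ∀ L η : ℝ, L ≠ 0 → 4 * R * |L| ≤ |η| → ‖𝓕 (chirp L g) η‖ ≤ K / |η| := by
  refine ⟨(2 * π)⁻¹ * (2 * (∫ s, ‖deriv g s‖) + 2 / R * ∫ s, ‖g s‖), by positivity,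
    fun L η hL hη => ?_⟩
  have hη0 : 0 < |η| := hη.trans_lt' (by positivity)
  have hphase : ∀ s ∈ tsupport g, |η| / 2 ≤ |2 * L * s - η| := fun s hs => by
    have hs' : |s| * |L| ≤ R * |L| := mul_le_mul_of_nonneg_right (hgR s hs) (abs_nonneg L)
    have htri : |η| - |2 * L * s| ≤ |2 * L * s - η| := by
      simpa only [abs_sub_comm η] using abs_sub_abs_le_abs_sub η (2 * L * s)
    rw [abs_mul, abs_mul, abs_two] at htri
    linarith
  have hL' : |L| ≤ |η| / (4 * R) := (le_div_iff₀' (by positivity)).2 hη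
  rw [fourier_chirp]
  calc ‖oscillatoryIntegral (quadraticPhase L η) g‖
      ≤ (2 * π)⁻¹ * ((∫ s, ‖deriv g s‖) / (|η| / 2) +
          2 * |L| * ((∫ s, ‖g s‖) / (|η| / 2) ^ 2)) :=
        norm_oscillatoryIntegral_quadraticPhase_le_first_order hg hgc (half_pos hη0) hphase
    _ ≤ (2 * π)⁻¹ * ((∫ s, ‖deriv g s‖) / (|η| / 2) +
          2 * (|η| / (4 * R)) * ((∫ s, ‖g s‖) / (|η| / 2) ^ 2)) := by gcongr
    _ = (2 * π)⁻¹ * (2 * (∫ s, ‖deriv g s‖) + 2 / R * ∫ s, ‖g s‖) / |η| := by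
      field_simp
      ring

lemma norm_fourier_gaussian_le {b : ℂ} (hb : 0 < b.re) (x : ℝ) :
    ‖𝓕 (fun s : ℝ => Complex.exp (-π * b * s ^ 2)) x‖ ≤ ‖b‖ ^ (-(1 / 2 : ℝ)) := by
  have hcoeff : ‖(1 : ℂ) / b ^ (1 / 2 : ℂ)‖ = ‖b‖ ^ (-(1 / 2 : ℝ)) := by
    have hcast : (1 / 2 : ℂ) = ((1 / 2 : ℝ) : ℂ) := by push_cast; rfl
    rw [norm_div, norm_one, hcast, Complex.norm_cpow_real, Real.rpow_neg (norm_nonneg b), one_div]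
  have hexp : ‖Complex.exp (-π / b * x ^ 2)‖ ≤ 1 := by
    have hre : (-π / b * x ^ 2 : ℂ).re = -(π * x ^ 2 * (b.re / Complex.normSq b)) := by
      rw [← Complex.inv_re, ← neg_mul, ← Complex.re_ofReal_mul]
      push_cast
      ring_nf
    rw [Complex.norm_exp, hre, Real.exp_le_one_iff, neg_nonpos]
    exact mul_nonneg (by positivity) (div_nonneg hb.le (Complex.normSq_nonneg b))
  rw [fourier_gaussian_pi hb, norm_mul, hcoeff]
  exact mul_le_of_le_one_right (by positivity) hexp

lemma fourier_fourierChar_smul (f : ℝ → ℂ) (ω x : ℝ) :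
    𝓕 (fun s => 𝐞 (-(s * ω)) • f s) x = 𝓕 f (x + ω) := by
  simp only [Real.fourier_real_eq, smul_smul, ← AddChar.map_add_eq_mul]
  congr with s
  ring_nf

lemma integral_fourier_mul_eq {f g : ℝ → ℂ} (hf : Integrable f) (hg : Integrable g) :
    ∫ s, 𝓕 f s * g s = ∫ x, f x * 𝓕 g x := by
  simpa using! VectorFourier.integral_fourierIntegral_smul_eq_flip (μ := volume) (ν := volume)
    (L := innerₗ ℝ) continuous_fourierChar continuous_inner hf hg

lemma integrable_exp_neg_pi_mul_sq {b : ℂ} (hb : 0 < b.re) :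
    Integrable fun s : ℝ => Complex.exp (-π * b * s ^ 2) := by
  have hre : 0 < (π * b).re := by
    rw [Complex.re_ofReal_mul]
    exact mul_pos pi_pos hb
  simpa only [neg_mul] using integrable_cexp_neg_mul_sq hre

lemma norm_integral_fourier_mul_gaussian_le {h : ℝ → ℂ} (hh : Integrable h) {b : ℂ}
    (hb : 0 < b.re) (ω : ℝ) :
    ‖∫ s, 𝓕 h s * (𝐞 (-(s * ω)) • Complex.exp (-π * b * s ^ 2))‖ ≤
      ‖b‖ ^ (-(1 / 2 : ℝ)) * ∫ x, ‖h x‖ := by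
  have hint : Integrable fun s : ℝ => 𝐞 (-(s * ω)) • Complex.exp (-π * b * s ^ 2) :=
    (integrable_exp_neg_pi_mul_sq hb).mono (by fun_prop)
      (Eventually.of_forall fun s => (Circle.norm_smul _ _).le)
  rw [integral_fourier_mul_eq hh hint, ← integral_const_mul]
  refine norm_integral_le_of_norm_le (hh.norm.const_mul _) (Eventually.of_forall fun x => ?_)
  rw [fourier_fourierChar_smul, norm_mul, mul_comm]
  gcongr
  exact norm_fourier_gaussian_le hb _

lemma cexp_mul_chirp (c s : ℝ) :
    Complex.exp (-(c : ℂ)⁻¹ * s ^ 2) * chirp L g s =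
      g s * Complex.exp (-π * (((π * c)⁻¹ : ℝ) - 2 * L * Complex.I) * s ^ 2) := by
  have hexp : -π * (((π * c)⁻¹ : ℝ) - 2 * L * Complex.I) * (s : ℂ) ^ 2 =
      -(c : ℂ)⁻¹ * s ^ 2 + 2 * π * (L * s ^ 2) * Complex.I := by
    push_cast
    field_simp
    ring
  rw [hexp, Complex.exp_add, chirp, Circle.smul_def, Real.fourierChar_apply, smul_eq_mul]
  push_cast
  ring

-- The multiplier `exp (2πiLs²)` is the limit, as `c → ∞`, of Gaussians with complex parameter
-- `b = (πc)⁻¹ - 2iL`, whose Fourier transforms are bounded uniformly in `c`.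
lemma norm_fourier_chirp_fourier_le {h : ℝ → ℂ} (hh : Integrable h) (hh' : Integrable (𝓕 h))
    (hL : L ≠ 0) :
    ‖𝓕 (chirp L (𝓕 h)) η‖ ≤ (2 * |L|) ^ (-(1 / 2 : ℝ)) * ∫ x, ‖h x‖ := by
  have hint : Integrable fun s => 𝐞 (-(s * η)) • chirp L (𝓕 h) s := by
    simpa [mul_comm] using (Real.fourierIntegral_convergent_iff η).2 (integrable_chirp hh')
  rw [Real.fourier_real_eq]
  refine le_of_tendsto (Real.tendsto_integral_cexp_sq_smul hint).norm ?_
  filter_upwards [eventually_gt_atTop 0] with c hc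
  set b : ℂ := ((π * c)⁻¹ : ℝ) - 2 * L * Complex.I with hb
  have hre : b.re = (π * c)⁻¹ := by simp [hb]
  have him : b.im = -(2 * L) := by simp [hb]
  have hnorm : 2 * |L| ≤ ‖b‖ := by simpa [him, abs_mul] using Complex.abs_im_le_norm b
  have hgauss (s : ℝ) : Complex.exp (-(c : ℂ)⁻¹ * ‖s‖ ^ 2) • (𝐞 (-(s * η)) • chirp L (𝓕 h) s) =
      𝓕 h s * (𝐞 (-(s * η)) • Complex.exp (-π * b * s ^ 2)) := by
    rw [Real.norm_eq_abs, ← Complex.ofReal_pow, sq_abs, Complex.ofReal_pow, smul_comm, smul_eq_mul,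
      cexp_mul_chirp, mul_smul_comm]
  push_cast at hgauss ⊢
  simp only [hgauss]
  refine (norm_integral_fourier_mul_gaussian_le hh (by rw [hre]; positivity) η).trans ?_
  gcongr ?_ * _
  exact Real.rpow_le_rpow_of_nonpos (by positivity) hnorm (by norm_num)

lemma norm_fourier_le_integral_norm (f : ℝ → ℂ) (x : ℝ) : ‖𝓕 f x‖ ≤ ∫ s, ‖f s‖ :=
  VectorFourier.norm_fourierIntegral_le_integral_norm _ _ _ _ _

lemma integrable_fourier_of_contDiff_two {f : ℝ → ℂ} (hf : ContDiff ℝ 2 f)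
    (hfc : HasCompactSupport f) : Integrable (𝓕 f) := by
  have hf' : ContDiff ℝ 1 (deriv f) := hf.iterate_deriv' 1 1
  have hint : Integrable f := hf.continuous.integrable_of_hasCompactSupport hfc
  have hint' : Integrable (deriv f) := hf'.continuous.integrable_of_hasCompactSupport hfc.deriv
  have hint'' : Integrable (deriv (deriv f)) :=
    (hf'.continuous_deriv le_rfl).integrable_of_hasCompactSupport hfc.deriv.deriv
  have hsecond (x : ℝ) : 𝓕 (deriv (deriv f)) x = -(2 * π * x) ^ 2 * 𝓕 f x := by
    rw [Real.fourier_deriv hint' (hf'.differentiable one_ne_zero) hint'',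
      Real.fourier_deriv hint (hf.differentiable two_ne_zero) hint']
    simp only [smul_eq_mul]
    linear_combination (2 * π * x) ^ 2 * 𝓕 f x * Complex.I_sq
  have hdecay (x : ℝ) :
      ‖𝓕 f x‖ ≤ ((∫ s, ‖f s‖) + ∫ s, ‖deriv (deriv f) s‖) * (1 + x ^ 2)⁻¹ := by
    have hx : x ^ 2 * ‖𝓕 f x‖ ≤ ∫ s, ‖deriv (deriv f) s‖ := by
      have hsq : x ^ 2 ≤ ‖(-(2 * π * x) ^ 2 : ℂ)‖ := by
        simpa [mul_pow, abs_of_pos pi_pos] using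
          le_mul_of_one_le_left (sq_nonneg x)
            (one_le_pow₀ (n := 2) (by linarith [pi_gt_three] : 1 ≤ 2 * π))
      calc x ^ 2 * ‖𝓕 f x‖ ≤ ‖(-(2 * π * x) ^ 2 : ℂ)‖ * ‖𝓕 f x‖ := by gcongr
        _ = ‖𝓕 (deriv (deriv f)) x‖ := by rw [hsecond, norm_mul]
        _ ≤ ∫ s, ‖deriv (deriv f) s‖ := norm_fourier_le_integral_norm _ x
    rw [← div_eq_mul_inv, le_div_iff₀ (by positivity)]
    linarith [norm_fourier_le_integral_norm f x]
  have hcont : Continuous (𝓕 f) := VectorFourier.fourierIntegral_continuous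
    continuous_fourierChar continuous_inner hint
  exact (integrable_inv_one_add_sq.const_mul _).mono' hcont.aestronglyMeasurable
    (Eventually.of_forall hdecay)

lemma exists_norm_fourier_chirp_le_rpow (hg : ContDiff ℝ 2 g) (hgc : HasCompactSupport g) :
    ∃ K, 0 ≤ K ∧ ∀ L η : ℝ, L ≠ 0 → ‖𝓕 (chirp L g) η‖ ≤ K * |L| ^ (-(1 / 2 : ℝ)) := by
  have hint : Integrable g := hg.continuous.integrable_of_hasCompactSupport hgc
  have hfourier : Integrable (𝓕 g) := integrable_fourier_of_contDiff_two hg hgc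
  have hinv : 𝓕 (𝓕⁻ g) = g := hg.continuous.fourier_fourierInv_eq hint hfourier
  have hint_inv : Integrable (𝓕⁻ g) := by
    simpa only [funext (Real.fourierInv_eq_fourier_neg g)] using hfourier.comp_neg
  refine ⟨∫ x, ‖𝓕⁻ g x‖, by positivity, fun L η hL => ?_⟩
  have hle := norm_fourier_chirp_fourier_le (η := η) hint_inv (by rwa [hinv]) hL
  rw [hinv, mul_comm] at hle
  refine hle.trans ?_
  gcongr _ * ?_
  exact Real.rpow_le_rpow_of_nonpos (abs_pos.2 hL) (by linarith [abs_nonneg L]) (by norm_num)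

/-- The `L¹`-normalised dilation of `f` by the factor `a`; thus `ψ_k = dilate (2 ^ k) ψ`. -/
def dilate (a : ℝ) (f : ℝ → ℂ) (t : ℝ) : ℂ := (a⁻¹ : ℝ) * f (a⁻¹ * t)

lemma odd_dilate (hg : Function.Odd g) : Function.Odd (dilate a g) := fun t => by
  simp only [dilate, mul_neg, hg _]

lemma fourier_dilate (ha : 0 < a) (f : ℝ → ℂ) (ξ : ℝ) : 𝓕 (dilate a f) ξ = 𝓕 f (a * ξ) := by
  have hscale := Measure.integral_comp_inv_mul_left (fun s => 𝐞 (-(s * (a * ξ))) • f s) a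
  rw [Real.fourier_real_eq, Real.fourier_real_eq, ← inv_smul_eq_iff₀ (abs_pos.2 ha.ne').ne'] at *
  rw [← hscale, abs_of_pos ha, ← integral_smul]
  congr with t
  rw [dilate, ← Complex.real_smul, smul_comm]
  congr 4
  field_simp

lemma chirp_dilate (ha : a ≠ 0) (f : ℝ → ℂ) :
    chirp L (dilate a f) = dilate a (chirp (L * a ^ 2) f) := by
  ext t
  have hphase : L * a ^ 2 * (a⁻¹ * t) ^ 2 = L * t ^ 2 := by field_simp
  rw [chirp, dilate, dilate, chirp, hphase, mul_smul_comm]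

/-- The function `φ_{k,λ,l}`, with `L = λ`, `a = 2 ^ k` and `b = 2 ^ (k - l)`: the chirped dilate of
`ψ` minus its mean `μ` times a dilate of `φ`. It has mean zero if `φ` has mean one. -/
def meanFreeChirp (L a b : ℝ) (ψ φ : ℝ → ℂ) (t : ℝ) : ℂ :=
  chirp L (dilate a ψ) t - (∫ s, chirp L (dilate a ψ) s) * dilate b φ t

variable {ψ : ℝ → ℂ} {r R : ℝ}

lemma fourier_meanFreeChirp_of_odd (hψ : Function.Odd ψ) (ha : 0 < a) (b : ℝ) (φ : ℝ → ℂ) (ξ : ℝ) :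
    𝓕 (meanFreeChirp L a b ψ φ) ξ = 𝓕 (chirp (L * a ^ 2) ψ) (a * ξ) := by
  have hmean : ∫ s, chirp L (dilate a ψ) s = 0 :=
    integral_eq_zero_of_odd (odd_chirp (odd_dilate hψ))
  have hchirp : meanFreeChirp L a b ψ φ = dilate a (chirp (L * a ^ 2) ψ) := by
    ext t
    rw [meanFreeChirp, hmean, zero_mul, sub_zero, chirp_dilate ha.ne']
  rw [hchirp, fourier_dilate ha]

lemma exists_norm_fourier_meanFreeChirp_le (hψ : ContDiff ℝ 2 ψ) (hodd : Function.Odd ψ)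
    (hr : 0 < r) (hR : 0 < R) (hsupp : support ψ ⊆ {x | r ≤ |x| ∧ |x| ≤ R}) :
    ∃ K, 0 < K ∧ ∀ (φ : ℝ → ℂ) (L a b M : ℝ), 0 < a → 0 < M → M ≤ L * a ^ 2 → L * a ^ 2 ≤ 2 * M →
      ∀ ξ : ℝ,
        (|ξ| ≤ r * (M / a) → ‖𝓕 (meanFreeChirp L a b ψ φ) ξ‖ ≤ K * (a / M ^ 2) * |ξ|) ∧
        ‖𝓕 (meanFreeChirp L a b ψ φ) ξ‖ ≤ K * M ^ (-(1 / 2 : ℝ)) ∧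
        (8 * R * (M / a) ≤ |ξ| → ‖𝓕 (meanFreeChirp L a b ψ φ) ξ‖ ≤ K * (a * |ξ|)⁻¹) := by
  have htsupp : tsupport ψ ⊆ {x | r ≤ |x| ∧ |x| ≤ R} := closure_minimal hsupp
    ((isClosed_le continuous_const continuous_abs).inter
      (isClosed_le continuous_abs continuous_const))
  have hψc : HasCompactSupport ψ := HasCompactSupport.of_support_subset_isCompact isCompact_Icc
    fun x hx => abs_le.1 (hsupp hx).2
  obtain ⟨K₁, hK₁, hlow⟩ := exists_norm_fourier_chirp_le_of_low_frequency hψ hψc hodd hr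
    fun s hs => (htsupp hs).1
  obtain ⟨K₂, hK₂, hmiddle⟩ := exists_norm_fourier_chirp_le_rpow hψ hψc
  obtain ⟨K₃, hK₃, hhigh⟩ := exists_norm_fourier_chirp_le_of_high_frequency
    (hψ.of_le one_le_two) hψc hR fun s hs => (htsupp hs).2
  refine ⟨K₁ + K₂ + K₃ + 1, by positivity, fun φ L a b M ha hM hML hLM ξ => ?_⟩
  rw [fourier_meanFreeChirp_of_odd hodd ha]
  have hL : 0 < L * a ^ 2 := hM.trans_le hML
  have hη : |a * ξ| = a * |ξ| := by rw [abs_mul, abs_of_pos ha]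
  refine ⟨fun hξ => ?_, ?_, fun hξ => ?_⟩
  · have hlowξ : |a * ξ| ≤ r * |L * a ^ 2| := by
      rw [hη, abs_of_pos hL]
      rw [← mul_div_assoc, le_div_iff₀' ha] at hξ
      exact hξ.trans (by gcongr)
    calc ‖𝓕 (chirp (L * a ^ 2) ψ) (a * ξ)‖ ≤ K₁ / (L * a ^ 2) ^ 2 * |a * ξ| :=
          hlow _ _ hL.ne' hlowξ
      _ ≤ (K₁ + K₂ + K₃ + 1) / M ^ 2 * (a * |ξ|) := by rw [hη]; gcongr; linarith
      _ = (K₁ + K₂ + K₃ + 1) * (a / M ^ 2) * |ξ| := by ring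
  · calc ‖𝓕 (chirp (L * a ^ 2) ψ) (a * ξ)‖ ≤ K₂ * (L * a ^ 2) ^ (-(1 / 2 : ℝ)) := by
          simpa only [abs_of_pos hL] using hmiddle _ (a * ξ) hL.ne'
      _ ≤ (K₁ + K₂ + K₃ + 1) * M ^ (-(1 / 2 : ℝ)) :=
          mul_le_mul (by linarith) (Real.rpow_le_rpow_of_nonpos hM hML (by norm_num))
            (by positivity) (by positivity)
  · have hhighξ : 4 * R * |L * a ^ 2| ≤ |a * ξ| := by
      rw [hη, abs_of_pos hL]
      rw [← mul_div_assoc, div_le_iff₀' ha] at hξ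
      refine le_trans ?_ hξ
      nlinarith
    calc ‖𝓕 (chirp (L * a ^ 2) ψ) (a * ξ)‖ ≤ K₃ / |a * ξ| := hhigh _ _ hL.ne' hhighξ
      _ ≤ (K₁ + K₂ + K₃ + 1) * (a * |ξ|)⁻¹ := by
          rw [hη, div_eq_mul_inv]
          gcongr
          linarith

theorem stmt13_general (hψ : ContDiff ℝ 2 ψ) (hodd : Function.Odd ψ) (hr : 0 < r) (hR : 0 < R)
    (hsupp : support ψ ⊆ {x | r ≤ |x| ∧ |x| ≤ R}) :
    ∃ K, 0 < K ∧ ∀ (φ : ℝ → ℂ) (k l : ℤ) (lam : ℝ),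
      1 ≤ lam * 2 ^ (2 * k - l) → lam * 2 ^ (2 * k - l) < 2 → ∀ ξ : ℝ,
        (|ξ| ≤ r * 2 ^ (l - k) →
          ‖𝓕 (meanFreeChirp lam (2 ^ k) (2 ^ (k - l)) ψ φ) ξ‖ ≤ K * 2 ^ (k - 2 * l) * |ξ|) ∧
        ‖𝓕 (meanFreeChirp lam (2 ^ k) (2 ^ (k - l)) ψ φ) ξ‖ ≤
          K * ((2 : ℝ) ^ l) ^ (-(1 / 2 : ℝ)) ∧
        (8 * R * 2 ^ (l - k) ≤ |ξ| →
          ‖𝓕 (meanFreeChirp lam (2 ^ k) (2 ^ (k - l)) ψ φ) ξ‖ ≤ K * ((2 : ℝ) ^ k * |ξ|)⁻¹) := by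
  obtain ⟨K, hK, h⟩ := exists_norm_fourier_meanFreeChirp_le hψ hodd hr hR hsupp
  refine ⟨K, hK, fun φ k l lam hlo hhi ξ => ?_⟩
  have hM : (0 : ℝ) < 2 ^ l := by positivity
  have h_cutoff : (2 : ℝ) ^ (l - k) = 2 ^ l / 2 ^ k := zpow_sub₀ two_ne_zero l k
  have h_slope : (2 : ℝ) ^ (k - 2 * l) = 2 ^ k / (2 ^ l) ^ 2 := by
    rw [zpow_sub₀ two_ne_zero, mul_comm, zpow_mul, zpow_ofNat]
  have h_ratio : lam * 2 ^ (2 * k - l) = lam * (2 ^ k) ^ 2 / 2 ^ l := by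
    rw [zpow_sub₀ two_ne_zero, mul_comm 2 k, zpow_mul, zpow_ofNat, mul_div_assoc]
  rw [h_ratio, one_le_div hM] at hlo
  rw [h_ratio, div_lt_iff₀ hM] at hhi
  rw [h_cutoff, h_slope]
  exact h φ lam (2 ^ k) (2 ^ (k - l)) (2 ^ l) (by positivity) hM hlo hhi.le ξ

lemma meanFreeChirp_dyadic_ofReal (k l : ℤ) (lam : ℝ) (ψ : ℝ → ℝ) (φ : ℝ → ℂ) :
    meanFreeChirp lam (2 ^ k) (2 ^ (k - l)) (fun s => ψ s) φ = fun t : ℝ =>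
      Complex.exp (Complex.I * ((2 * π * (lam * t ^ 2) : ℝ) : ℂ)) *
          (((2 : ℝ) ^ (-k) * ψ ((2 : ℝ) ^ (-k) * t) : ℝ) : ℂ)
        - (∫ s : ℝ, Complex.exp (Complex.I * ((2 * π * (lam * s ^ 2) : ℝ) : ℂ)) *
            (((2 : ℝ) ^ (-k) * ψ ((2 : ℝ) ^ (-k) * s) : ℝ) : ℂ))
          * (((2 : ℝ) ^ (l - k) : ℝ) : ℂ) * φ ((2 : ℝ) ^ (l - k) * t) := by
  ext t
  simp only [meanFreeChirp, chirp, dilate, Circle.smul_def, smul_eq_mul, Real.fourierChar_apply,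
    ← zpow_neg, neg_sub, Complex.ofReal_mul (_ ^ (-k)), mul_assoc, mul_comm Complex.I]

end

/-- Estimate (e:EST2) for `l > 0`: with `φ_{k,λ,l}(t) = e(λt²)ψ_k(t) - μ φ_{k-l}(t)`, there are
constants `0 < c < 1 < C` with `|φ̂_{k,λ,l}(ξ)| ≲ 2^{k-2l}|ξ|` for `|ξ| ≤ c2^{l-k}`,
`≲ 2^{-l/2}` for `c2^{l-k} ≤ |ξ| ≤ C2^{l-k}`, and `≲ (2^k|ξ|)⁻¹` for `|ξ| ≥ C2^{l-k}`. -/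
theorem stmt13 (ψ : ℝ → ℝ) (hψ : ContDiff ℝ (⊤ : ℕ∞) ψ) (hodd : ∀ x, ψ (-x) = -ψ x)
    (hsupp : ∀ x, ψ x ≠ 0 → 1 / 4 ≤ |x| ∧ |x| ≤ 1)
    (φ : SchwartzMap ℝ ℂ)
    (hφre : ∀ ξ : ℝ,
      Set.indicator (Set.Icc (-(1 / 8) : ℝ) (1 / 8)) (fun _ => 1) ξ ≤ (𝓕 ⇑φ ξ).re)
    (hφim : ∀ ξ : ℝ, (𝓕 ⇑φ ξ).im = 0)
    (hφbd : ∀ ξ : ℝ,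
      ‖𝓕 ⇑φ ξ‖ ≤ Set.indicator (Set.Icc (-(1 / 4) : ℝ) (1 / 4)) (fun _ => 1) ξ) :
    ∃ c C K : ℝ, 0 < c ∧ c < 1 ∧ 1 < C ∧ 0 < K ∧
      ∀ (k l : ℤ) (lam : ℝ), 0 < l → 0 < lam →
      1 ≤ lam * 2 ^ (2 * k - l) → lam * 2 ^ (2 * k - l) < 2 →
      ∀ ξ : ℝ,
      (|ξ| ≤ c * 2 ^ (l - k) →
        ‖𝓕 (fun t : ℝ =>
            Complex.exp (Complex.I * ((2 * π * (lam * t ^ 2) : ℝ) : ℂ)) *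
              (((2 : ℝ) ^ (-k) * ψ ((2 : ℝ) ^ (-k) * t) : ℝ) : ℂ)
            - (∫ s : ℝ, Complex.exp (Complex.I * ((2 * π * (lam * s ^ 2) : ℝ) : ℂ)) *
                (((2 : ℝ) ^ (-k) * ψ ((2 : ℝ) ^ (-k) * s) : ℝ) : ℂ))
              * (((2 : ℝ) ^ (l - k) : ℝ) : ℂ) * φ ((2 : ℝ) ^ (l - k) * t)) ξ‖ ≤
          K * 2 ^ (k - 2 * l) * |ξ|) ∧
      (c * 2 ^ (l - k) ≤ |ξ| → |ξ| ≤ C * 2 ^ (l - k) →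
        ‖𝓕 (fun t : ℝ =>
            Complex.exp (Complex.I * ((2 * π * (lam * t ^ 2) : ℝ) : ℂ)) *
              (((2 : ℝ) ^ (-k) * ψ ((2 : ℝ) ^ (-k) * t) : ℝ) : ℂ)
            - (∫ s : ℝ, Complex.exp (Complex.I * ((2 * π * (lam * s ^ 2) : ℝ) : ℂ)) *
                (((2 : ℝ) ^ (-k) * ψ ((2 : ℝ) ^ (-k) * s) : ℝ) : ℂ))
              * (((2 : ℝ) ^ (l - k) : ℝ) : ℂ) * φ ((2 : ℝ) ^ (l - k) * t)) ξ‖ ≤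
          K * ((2 : ℝ) ^ (l : ℤ)) ^ (-(1 / 2 : ℝ))) ∧
      (C * 2 ^ (l - k) ≤ |ξ| →
        ‖𝓕 (fun t : ℝ =>
            Complex.exp (Complex.I * ((2 * π * (lam * t ^ 2) : ℝ) : ℂ)) *
              (((2 : ℝ) ^ (-k) * ψ ((2 : ℝ) ^ (-k) * t) : ℝ) : ℂ)
            - (∫ s : ℝ, Complex.exp (Complex.I * ((2 * π * (lam * s ^ 2) : ℝ) : ℂ)) *
                (((2 : ℝ) ^ (-k) * ψ ((2 : ℝ) ^ (-k) * s) : ℝ) : ℂ))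
              * (((2 : ℝ) ^ (l - k) : ℝ) : ℂ) * φ ((2 : ℝ) ^ (l - k) * t)) ξ‖ ≤
          K * ((2 : ℝ) ^ k * |ξ|)⁻¹) := by
  obtain ⟨K, hK, h⟩ := stmt13_general (ψ := fun s => (ψ s : ℂ)) (r := 1 / 4) (R := 1)
    (Complex.ofRealCLM.contDiff.comp (contDiff_infty.1 hψ 2))
    (fun x => by simp [hodd]) (by norm_num) one_pos
    (fun x hx => hsupp x (Complex.ofReal_ne_zero.1 hx))
  simp only [meanFreeChirp_dyadic_ofReal, mul_one] at h
  refine ⟨1 / 4, 8, K, by norm_num, by norm_num, by norm_num, hK,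
    fun k l lam _ _ hlo hhi ξ => ?_⟩
  obtain ⟨hlow, hmiddle, hhigh⟩ := h φ k l lam hlo hhi ξ
  exact ⟨hlow, fun _ _ => hmiddle, hhigh⟩
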